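/- First moment of the score for the SSL prior: with κ = 2 (the tail exponent of the Cauchy slab), there exist constants D_1, D_2 > 0 such that for all α ∈ (𝒞·log n/n, 1], D_1·ζ^{κ−1}·g_1(ζ) ≤ m̃(α) ≤ D_2·ζ^{κ−1}·g_1(ζ), where ζ = ζ(α) = min{s > 0 : β(s) = 1/α}. Moreover there exist constants c, C > 0 independent of n such that c ≤ m̃(1) ≤ C. -/

import Mathlib

/-!
Statement 19: first moment of the score for the SSL prior.
-/

open MeasureTheory Real Set

noncomputable section

/-- Standard normal density. -/
def phi (x : ℝ) : ℝ := Real.exp (-x ^ 2 / 2) / Real.sqrt (2 * Real.pi)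

/-- Spike inverse-scale `λ₀ = 5√(2π) n`. -/
def lam0 (n : ℕ) : ℝ := 5 * Real.sqrt (2 * Real.pi) * n

/-- Slab scale parameter `λ₁ = 0.05`. -/
def lam1 : ℝ := 0.05

/-- Spike density: Laplace with parameter `λ₀`. -/
def gamma0 (n : ℕ) (x : ℝ) : ℝ := lam0 n / 2 * Real.exp (-(lam0 n) * |x|)

/-- Slab density: Cauchy with scale `1/λ₁`. -/
def gamma1 (x : ℝ) : ℝ := lam1 / Real.pi * (1 + lam1 ^ 2 * x ^ 2)⁻¹

/-- `g₀ = φ * γ₀`. -/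
def g0 (n : ℕ) (x : ℝ) : ℝ := ∫ u, phi (x - u) * gamma0 n u

/-- `g₁ = φ * γ₁`. -/
def g1 (x : ℝ) : ℝ := ∫ u, phi (x - u) * gamma1 u

/-- `β(x) = g₁(x)/g₀(x) - 1` for the SSL prior. -/
def betaSSL (n : ℕ) (x : ℝ) : ℝ := g1 x / g0 n x - 1

/-- `m̃(α) = -E₀ β(X, α)`, `X ~ N(0,1)`, with `β(x,α) = β(x)/(1 + αβ(x))`. -/
def mtildeSSL (n : ℕ) (α : ℝ) : ℝ :=
  -∫ x, betaSSL n x / (1 + α * betaSSL n x) ∂(ProbabilityTheory.gaussianReal 0 1)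

/-- `ζα` is the SSL pseudo-threshold for `α`: the least positive solution of
`β(s) = 1/α`. -/
def IsZetaSSL (n : ℕ) (α ζα : ℝ) : Prop :=
  0 < ζα ∧ betaSSL n ζα = 1 / α ∧ ∀ s : ℝ, 0 < s → betaSSL n s = 1 / α → ζα ≤ s

/-!
Write `p = (1 - α) g₀ + α g₁`, so that `β(·, α) = (g₁ - g₀) / p` is the score of the mixing weight.
As `g₀` and `g₁` have the same mass, `-∫ g₀ β(·, α) = ∫ α (g₁ - g₀)² / p` exactly, and replacing
`g₀` by `φ` costs at most `‖β(·, α)‖_∞ ‖g₀ - φ‖₁ = O(1 / (α λ₀²)) = O(1 / n)`, which is negligible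
against `1 / ζ` because `ζ = o(n)`.

The information integrand is at most `g₁`, up to an `O(α) g₀` term, so the region `|x| > ζ / 2`
contributes at most a Cauchy tail of order `1 / ζ`; on `|x| ≤ ζ / 2` it is at most `α g₁² / g₀`, up
to the same term, and `α ≍ g₀(ζ) / g₁(ζ)` makes both contributions exponentially small in `ζ²`.
Conversely the integrand is at least `g₁ / 4` wherever `β ≥ 1 / α`, in particular on
`[M ζ, 2 M ζ]` for a large constant `M`. Hence `m̃(α) ≍ 1 / ζ ≍ ζ g₁(ζ)`.

At `α = 1` the score is `1 - g₀ / g₁`, and the slab is so flat that `∫ φ g₀ / g₁ ≥ 2`.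
-/

open scoped Convolution

section Mixture

variable {Ω : Type*} {f₀ f₁ : Ω → ℝ} {α K : ℝ} {x : Ω}

/-- The score `∂/∂α log ((1 - α) f₀ + α f₁)` of the mixing weight `α` in a two-component mixture of
densities; it is the `β(x, α)` of the paper, cleared of the inner quotient `f₁ / f₀`. -/
def mixtureScore (f₀ f₁ : Ω → ℝ) (α : ℝ) (x : Ω) : ℝ :=
  (f₁ x - f₀ x) / ((1 - α) * f₀ x + α * f₁ x)

/-- The Fisher information density of the mixing weight `α`, scaled by `α`; its integral is the
leading term of `m̃(α)`. -/
def mixtureInfo (f₀ f₁ : Ω → ℝ) (α : ℝ) (x : Ω) : ℝ :=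
  α * (f₁ x - f₀ x) ^ 2 / ((1 - α) * f₀ x + α * f₁ x)

lemma div_one_add_mul_eq_mixtureScore (h₀ : f₀ x ≠ 0) :
    (f₁ x / f₀ x - 1) / (1 + α * (f₁ x / f₀ x - 1)) = mixtureScore f₀ f₁ α x := by
  rw [mixtureScore, div_sub_one h₀, div_div, mul_add, mul_one, mul_left_comm,
    mul_div_cancel₀ _ h₀]
  ring_nf

lemma mixture_pos (h₀ : 0 < f₀ x) (h₁ : 0 < f₁ x) (hα₀ : 0 < α) (hα₁ : α ≤ 1) :
    0 < (1 - α) * f₀ x + α * f₁ x := by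
  nlinarith [mul_pos hα₀ h₁, mul_nonneg (sub_nonneg.2 hα₁) h₀.le]

lemma spike_le_mul_mixture (h₀ : 0 < f₀ x) (hα₀ : 0 < α) (hα₁ : α ≤ 1) (hK : 1 ≤ K)
    (hle : f₀ x ≤ K * f₁ x) : f₀ x ≤ K * ((1 - α) * f₀ x + α * f₁ x) := by
  have hspike : (1 - α) * f₀ x ≤ K * ((1 - α) * f₀ x) :=
    le_mul_of_one_le_left (mul_nonneg (sub_nonneg.2 hα₁) h₀.le) hK
  nlinarith [mul_le_mul_of_nonneg_left hle hα₀.le]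

lemma abs_mixtureScore_le (h₀ : 0 < f₀ x) (h₁ : 0 < f₁ x) (hα₀ : 0 < α) (hα₁ : α ≤ 1)
    (hK : 1 ≤ K) (hle : f₀ x ≤ K * f₁ x) : |mixtureScore f₀ f₁ α x| ≤ K / α := by
  have hp := mixture_pos h₀ h₁ hα₀ hα₁
  have hspike := spike_le_mul_mixture h₀ hα₀ hα₁ hK hle
  rw [mixtureScore, abs_div, abs_of_pos hp, div_le_div_iff₀ hp hα₀]
  rcases le_total (f₀ x) (f₁ x) with h | h
  · rw [abs_of_nonneg (sub_nonneg.2 h)]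
    nlinarith
  · rw [abs_of_nonpos (sub_nonpos.2 h)]
    nlinarith

lemma mixtureInfo_nonneg (h₀ : 0 < f₀ x) (h₁ : 0 < f₁ x) (hα₀ : 0 < α) (hα₁ : α ≤ 1) :
    0 ≤ mixtureInfo f₀ f₁ α x :=
  div_nonneg (mul_nonneg hα₀.le (sq_nonneg _)) (mixture_pos h₀ h₁ hα₀ hα₁).le

lemma mixtureInfo_le_spike (h₀ : 0 < f₀ x) (h₁ : 0 < f₁ x) (hα₀ : 0 < α) (hα₁ : α ≤ 1)
    (hK : 1 ≤ K) (hle : f₀ x ≤ K * f₁ x) (h : f₁ x ≤ f₀ x) :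
    mixtureInfo f₀ f₁ α x ≤ α * K * f₀ x := by
  have hsq : (f₁ x - f₀ x) ^ 2 ≤ f₀ x ^ 2 := sq_le_sq' (by linarith) (by linarith)
  rw [mixtureInfo, div_le_iff₀ (mixture_pos h₀ h₁ hα₀ hα₁)]
  calc α * (f₁ x - f₀ x) ^ 2 ≤ α * f₀ x * f₀ x := by
        rw [mul_assoc, ← sq]
        gcongr
    _ ≤ α * f₀ x * (K * ((1 - α) * f₀ x + α * f₁ x)) := by
      gcongr
      exact spike_le_mul_mixture h₀ hα₀ hα₁ hK hle
    _ = _ := by ring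

lemma mixtureInfo_le_slab_add (h₀ : 0 < f₀ x) (h₁ : 0 < f₁ x) (hα₀ : 0 < α) (hα₁ : α ≤ 1)
    (hK : 1 ≤ K) (hle : f₀ x ≤ K * f₁ x) :
    mixtureInfo f₀ f₁ α x ≤ f₁ x + α * K * f₀ x := by
  rcases le_total (f₁ x) (f₀ x) with h | h
  · linarith [mixtureInfo_le_spike h₀ h₁ hα₀ hα₁ hK hle h]
  · suffices mixtureInfo f₀ f₁ α x ≤ f₁ x from this.trans (le_add_of_nonneg_right (by positivity))
    rw [mixtureInfo, div_le_iff₀ (mixture_pos h₀ h₁ hα₀ hα₁)]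
    nlinarith [mul_nonneg (mul_nonneg (sub_nonneg.2 hα₁) h₀.le) h₁.le,
      mul_nonneg (mul_nonneg hα₀.le h₀.le) (sub_nonneg.2 h), mul_pos hα₀ (mul_pos h₀ h₁)]

lemma mixtureInfo_le_sq_div_add (h₀ : 0 < f₀ x) (h₁ : 0 < f₁ x) (hα₀ : 0 < α) (hα₁ : α ≤ 1)
    (hK : 1 ≤ K) (hle : f₀ x ≤ K * f₁ x) :
    mixtureInfo f₀ f₁ α x ≤ α * (f₁ x ^ 2 / f₀ x) + α * K * f₀ x := by
  rcases le_total (f₁ x) (f₀ x) with h | h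
  · exact (mixtureInfo_le_spike h₀ h₁ hα₀ hα₁ hK hle h).trans
      (le_add_of_nonneg_left (by positivity))
  · have hdenom : f₀ x ≤ (1 - α) * f₀ x + α * f₁ x := by nlinarith
    have hsq : (f₁ x - f₀ x) ^ 2 ≤ f₁ x ^ 2 := sq_le_sq' (by linarith) (by linarith)
    calc mixtureInfo f₀ f₁ α x ≤ α * f₁ x ^ 2 / f₀ x := by
          unfold mixtureInfo
          gcongr
      _ ≤ α * (f₁ x ^ 2 / f₀ x) + α * K * f₀ x := by
          rw [mul_div_assoc]
          exact le_add_of_nonneg_right (by positivity)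

lemma slab_div_four_le_mixtureInfo (h₀ : 0 < f₀ x) (hα₀ : 0 < α) (hα₁ : α ≤ 1)
    (hβ : 1 / α ≤ f₁ x / f₀ x - 1) : f₁ x / 4 ≤ mixtureInfo f₀ f₁ α x := by
  have hspike : f₀ x ≤ α * (f₁ x - f₀ x) := by
    rwa [div_sub_one h₀.ne', div_le_div_iff₀ hα₀ h₀, one_mul, mul_comm] at hβ
  have hslab : f₁ x / 2 ≤ f₁ x - f₀ x := by nlinarith
  rw [mixtureInfo, le_div_iff₀ (by linarith)]
  calc f₁ x / 4 * ((1 - α) * f₀ x + α * f₁ x)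
      ≤ (f₁ x - f₀ x) / 2 * (2 * (α * (f₁ x - f₀ x))) :=
        mul_le_mul (by linarith) (by linarith) (by linarith) (by nlinarith)
    _ = α * (f₁ x - f₀ x) ^ 2 := by ring

lemma mixtureInfo_eq_sub (h₀ : 0 < f₀ x) (h₁ : 0 < f₁ x) (hα₀ : 0 < α) (hα₁ : α ≤ 1) :
    mixtureInfo f₀ f₁ α x = f₁ x - f₀ x - f₀ x * mixtureScore f₀ f₁ α x := by
  have hp := (mixture_pos h₀ h₁ hα₀ hα₁).ne'
  rw [mixtureInfo, mixtureScore, mul_div_assoc', eq_sub_iff_add_eq, ← add_div, div_eq_iff hp]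
  ring

variable [MeasurableSpace Ω] {μ : Measure Ω}

lemma integrable_mul_mixtureScore {f : Ω → ℝ} (h₀ : ∀ x, 0 < f₀ x) (h₁ : ∀ x, 0 < f₁ x)
    (hi₀ : Integrable f₀ μ) (hi₁ : Integrable f₁ μ) (hα₀ : 0 < α) (hα₁ : α ≤ 1) (hK : 1 ≤ K)
    (hle : ∀ x, f₀ x ≤ K * f₁ x) (hf : Integrable f μ) :
    Integrable (fun x => f x * mixtureScore f₀ f₁ α x) μ := by
  have hmeas : AEMeasurable (mixtureScore f₀ f₁ α) μ :=
    (hi₁.sub hi₀).aemeasurable.div ((hi₀.const_mul (1 - α)).add (hi₁.const_mul α)).aemeasurable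
  exact hf.mul_bdd hmeas.aestronglyMeasurable (.of_forall fun x =>
    abs_mixtureScore_le (h₀ x) (h₁ x) hα₀ hα₁ hK (hle x))

lemma integrable_mixtureInfo (h₀ : ∀ x, 0 < f₀ x) (h₁ : ∀ x, 0 < f₁ x)
    (hi₀ : Integrable f₀ μ) (hi₁ : Integrable f₁ μ) (hα₀ : 0 < α) (hα₁ : α ≤ 1) (hK : 1 ≤ K)
    (hle : ∀ x, f₀ x ≤ K * f₁ x) : Integrable (mixtureInfo f₀ f₁ α) μ :=
  ((hi₁.sub hi₀).sub
    (integrable_mul_mixtureScore h₀ h₁ hi₀ hi₁ hα₀ hα₁ hK hle hi₀)).congr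
      (.of_forall fun x => (mixtureInfo_eq_sub (h₀ x) (h₁ x) hα₀ hα₁).symm)

lemma integral_spike_mul_mixtureScore (h₀ : ∀ x, 0 < f₀ x) (h₁ : ∀ x, 0 < f₁ x)
    (hi₀ : Integrable f₀ μ) (hi₁ : Integrable f₁ μ) (hα₀ : 0 < α) (hα₁ : α ≤ 1) (hK : 1 ≤ K)
    (hle : ∀ x, f₀ x ≤ K * f₁ x) (hmass : ∫ x, f₀ x ∂μ = ∫ x, f₁ x ∂μ) :
    ∫ x, f₀ x * mixtureScore f₀ f₁ α x ∂μ = -∫ x, mixtureInfo f₀ f₁ α x ∂μ := by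
  simp_rw [mixtureInfo_eq_sub (h₀ _) (h₁ _) hα₀ hα₁]
  have hs := integrable_mul_mixtureScore h₀ h₁ hi₀ hi₁ hα₀ hα₁ hK hle hi₀
  have hd : Integrable (fun x => f₁ x - f₀ x) μ := hi₁.sub hi₀
  rw [integral_sub hd hs, integral_sub hi₁ hi₀, hmass, sub_self, zero_sub, neg_neg]

-- Under the spike `f₀` the identity is exact; changing measure to `f` costs `‖score‖_∞ ‖f - f₀‖₁`.
lemma abs_neg_integral_mul_mixtureScore_sub_le {f : Ω → ℝ} (h₀ : ∀ x, 0 < f₀ x)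
    (h₁ : ∀ x, 0 < f₁ x) (hi₀ : Integrable f₀ μ) (hi₁ : Integrable f₁ μ) (hα₀ : 0 < α)
    (hα₁ : α ≤ 1) (hK : 1 ≤ K) (hle : ∀ x, f₀ x ≤ K * f₁ x)
    (hmass : ∫ x, f₀ x ∂μ = ∫ x, f₁ x ∂μ) (hf : Integrable f μ) :
    |(-∫ x, f x * mixtureScore f₀ f₁ α x ∂μ) - ∫ x, mixtureInfo f₀ f₁ α x ∂μ|
      ≤ K / α * ∫ x, |f₀ x - f x| ∂μ := by
  have hint {g : Ω → ℝ} (hg : Integrable g μ) :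
      Integrable (fun x => g x * mixtureScore f₀ f₁ α x) μ :=
    integrable_mul_mixtureScore h₀ h₁ hi₀ hi₁ hα₀ hα₁ hK hle hg
  calc _ = |∫ x, (f₀ x - f x) * mixtureScore f₀ f₁ α x ∂μ| := by
        simp_rw [sub_mul]
        rw [integral_sub (hint hi₀) (hint hf),
          integral_spike_mul_mixtureScore h₀ h₁ hi₀ hi₁ hα₀ hα₁ hK hle hmass, neg_sub_comm]
    _ ≤ ∫ x, |(f₀ x - f x) * mixtureScore f₀ f₁ α x| ∂μ := abs_integral_le_integral_abs
    _ ≤ ∫ x, K / α * |f₀ x - f x| ∂μ := by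
        refine integral_mono (hint (hi₀.sub hf)).abs ((hi₀.sub hf).abs.const_mul _) fun x => ?_
        rw [abs_mul, mul_comm]
        gcongr
        exact abs_mixtureScore_le (h₀ x) (h₁ x) hα₀ hα₁ hK (hle x)
    _ = K / α * ∫ x, |f₀ x - f x| ∂μ := integral_const_mul _ _

lemma integral_abs_sub_le_of_mul_le {p q : Ω → ℝ} {δ : ℝ} (hp : ∀ x, 0 ≤ p x) (hδ : 0 ≤ δ)
    (hpi : Integrable p μ) (hqi : Integrable q μ) (hmass : ∫ x, p x ∂μ = ∫ x, q x ∂μ)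
    (hle : ∀ x, (1 - δ) * p x ≤ q x) : ∫ x, |q x - p x| ∂μ ≤ 2 * δ * ∫ x, p x ∂μ := by
  have hd : Integrable (fun x => q x - p x) μ := hqi.sub hpi
  calc ∫ x, |q x - p x| ∂μ ≤ ∫ x, (q x - p x + 2 * δ * p x) ∂μ := by
        refine integral_mono hd.abs (hd.add (hpi.const_mul _)) fun x => ?_
        have hδp := mul_nonneg hδ (hp x)
        exact abs_le.2 ⟨by linarith [hle x], by linarith⟩
    _ = 2 * δ * ∫ x, p x ∂μ := by
        rw [integral_add hd (hpi.const_mul _), integral_sub hqi hpi,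
          integral_const_mul, hmass, sub_self, zero_add]

end Mixture

section Convolution

variable {k f : ℝ → ℝ} {B : ℝ}

lemma integrable_sub_mul (hk : Continuous k) (hB : ∀ y, |k y| ≤ B) (hf : Integrable f) (x : ℝ) :
    Integrable fun u => k (x - u) * f u :=
  hf.bdd_mul (c := B) (by fun_prop) (.of_forall fun _ => hB _)

lemma integral_sub_mul_eq_convolution (k f : ℝ → ℝ) :
    (fun x => ∫ u, k (x - u) * f u) = f ⋆[ContinuousLinearMap.mul ℝ ℝ] k := by
  ext x
  simp only [convolution_def, ContinuousLinearMap.mul_apply', mul_comm]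

lemma continuous_integral_sub_mul (hk : Continuous k) (hB : ∀ y, |k y| ≤ B) (hf : Integrable f) :
    Continuous fun x => ∫ u, k (x - u) * f u := by
  rw [integral_sub_mul_eq_convolution]
  exact BddAbove.continuous_convolution_right_of_integrable _
    ⟨B, forall_mem_range.2 hB⟩ hf hk

lemma integrable_integral_sub_mul (hk : Integrable k) (hf : Integrable f) :
    Integrable fun x => ∫ u, k (x - u) * f u := by
  rw [integral_sub_mul_eq_convolution]
  exact hf.integrable_convolution _ hk

lemma integral_integral_sub_mul (hk : Integrable k) (hf : Integrable f) :
    ∫ x, ∫ u, k (x - u) * f u = (∫ u, f u) * ∫ y, k y := by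
  rw [integral_sub_mul_eq_convolution]
  exact integral_convolution _ hf hk

-- Peetre's inequality: because of it, convolution with a kernel of finite second moment preserves
-- quadratic decay in both directions.
lemma one_add_add_sq_le (x y : ℝ) : 1 + (x + y) ^ 2 ≤ 2 * ((1 + x ^ 2) * (1 + y ^ 2)) := by
  nlinarith [sq_nonneg (x - y), sq_nonneg (x * y)]

variable {w : ℝ → ℝ} {A : ℝ}

lemma integral_sub_mul_le (hf₀ : ∀ y, 0 ≤ f y) (hf : ∀ y, f y ≤ A / (1 + y ^ 2))
    (hw₀ : ∀ u, 0 ≤ w u) (hw : Integrable w) (hw₂ : Integrable fun u => u ^ 2 * w u) (x : ℝ) :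
    ∫ u, f (x - u) * w u ≤ 2 * A * ((∫ u, w u) + ∫ u, u ^ 2 * w u) / (1 + x ^ 2) := by
  have hA : 0 ≤ A := by simpa using (hf₀ 0).trans (hf 0)
  calc ∫ u, f (x - u) * w u ≤ ∫ u, 2 * A / (1 + x ^ 2) * (w u + u ^ 2 * w u) := by
        refine integral_mono_of_nonneg (.of_forall fun u => mul_nonneg (hf₀ _) (hw₀ u))
          ((hw.add hw₂).const_mul _) (.of_forall fun u => ?_)
        have hpeetre := one_add_add_sq_le (x - u) u
        rw [sub_add_cancel] at hpeetre
        have hdecay : A / (1 + (x - u) ^ 2) ≤ 2 * A / (1 + x ^ 2) * (1 + u ^ 2) := by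
          rw [div_mul_eq_mul_div, div_le_div_iff₀ (by positivity) (by positivity)]
          linarith [mul_le_mul_of_nonneg_left hpeetre hA]
        calc f (x - u) * w u ≤ 2 * A / (1 + x ^ 2) * (1 + u ^ 2) * w u :=
              mul_le_mul_of_nonneg_right ((hf _).trans hdecay) (hw₀ u)
          _ = 2 * A / (1 + x ^ 2) * (w u + u ^ 2 * w u) := by ring
    _ = _ := by
        rw [integral_const_mul, integral_add hw hw₂]
        ring

lemma le_integral_sub_mul (hA : 0 ≤ A) (hf : ∀ y, A / (1 + y ^ 2) ≤ f y)
    (hw₀ : ∀ u, 0 ≤ w u) (hw : Integrable w) (hw₂ : Integrable fun u => u ^ 2 * w u) {x : ℝ}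
    (hfw : Integrable fun u => f (x - u) * w u) :
    A * (3 * (∫ u, w u) - ∫ u, u ^ 2 * w u) / (8 * (1 + x ^ 2)) ≤ ∫ u, f (x - u) * w u := by
  calc _ = ∫ u, A / (8 * (1 + x ^ 2)) * (3 * w u - u ^ 2 * w u) := by
        rw [integral_const_mul, integral_sub (hw.const_mul 3) hw₂, integral_const_mul]
        ring
    _ ≤ ∫ u, f (x - u) * w u := by
        refine integral_mono (((hw.const_mul 3).sub hw₂).const_mul _) hfw fun u => ?_
        have hpeetre := one_add_add_sq_le x (-u)
        rw [← sub_eq_add_neg, neg_sq] at hpeetre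
        have htangent : (3 - u ^ 2) * (1 + u ^ 2) ≤ 4 := by nlinarith [sq_nonneg (u ^ 2 - 1)]
        have hdecay : A / (8 * (1 + x ^ 2)) * (3 - u ^ 2) ≤ A / (1 + (x - u) ^ 2) := by
          calc A / (8 * (1 + x ^ 2)) * (3 - u ^ 2)
              ≤ A / (8 * (1 + x ^ 2)) * (4 / (1 + u ^ 2)) := by
                gcongr
                rwa [le_div_iff₀ (by positivity)]
            _ = A / (2 * ((1 + x ^ 2) * (1 + u ^ 2))) := by
                field_simp
                ring
            _ ≤ A / (1 + (x - u) ^ 2) := by gcongr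
        calc A / (8 * (1 + x ^ 2)) * (3 * w u - u ^ 2 * w u)
            = A / (8 * (1 + x ^ 2)) * (3 - u ^ 2) * w u := by ring
          _ ≤ f (x - u) * w u := mul_le_mul_of_nonneg_right (hdecay.trans (hf _)) (hw₀ u)

end Convolution

section RealIntegrals

lemma integral_eq_zero_of_odd {f : ℝ → ℝ} (hf : f.Odd) : ∫ u, f u = 0 := by
  have hneg := integral_neg_eq_self f volume
  simp_rw [hf _, integral_neg] at hneg
  linarith

lemma integrable_id_mul_of_sq {f : ℝ → ℝ} (hf : Integrable f)
    (hf₂ : Integrable fun u => u ^ 2 * f u) : Integrable fun u => u * f u := by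
  refine (hf.norm.add hf₂.norm).mono' (by fun_prop) (.of_forall fun u => ?_)
  have hu : |u| ≤ 1 + |u ^ 2| := by
    rw [abs_of_nonneg (sq_nonneg u), ← sq_abs]
    nlinarith [sq_nonneg (|u| - 1)]
  simpa [norm_mul, add_mul] using mul_le_mul_of_nonneg_right hu (abs_nonneg (f u))

lemma integral_abs_pow_mul_exp_neg_mul_abs (k : ℕ) {a : ℝ} (ha : 0 < a) :
    ∫ u, |u| ^ k * rexp (-a * |u|) = 2 * k.factorial / a ^ (k + 1) := by
  have hGamma := Real.integral_rpow_mul_exp_neg_mul_Ioi (a := k + 1) (r := a) (by positivity) ha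
  simp only [add_sub_cancel_right, rpow_natCast, Real.Gamma_nat_eq_factorial, ← neg_mul] at hGamma
  rw [integral_comp_abs (f := fun u => u ^ k * rexp (-a * u)), hGamma, one_div, inv_rpow ha.le,
    ← Nat.cast_add_one, rpow_natCast]
  ring

lemma integral_exp_neg_mul_abs {a : ℝ} (ha : 0 < a) : ∫ u, rexp (-a * |u|) = 2 / a := by
  simpa using integral_abs_pow_mul_exp_neg_mul_abs 0 ha

lemma integral_sq_mul_exp_neg_mul_abs {a : ℝ} (ha : 0 < a) :
    ∫ u, u ^ 2 * rexp (-a * |u|) = 4 / a ^ 3 := by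
  have h := integral_abs_pow_mul_exp_neg_mul_abs 2 ha
  norm_num [Nat.factorial] at h
  simpa using h

lemma setIntegral_compl_Icc_inv_one_add_sq_le {t : ℝ} (ht : 0 < t) :
    ∫ x in (Icc (-t) t)ᶜ, (1 + x ^ 2)⁻¹ ≤ 2 / t := by
  have harctan : arctan t⁻¹ ≤ t⁻¹ := by
    have h := Real.le_tan (arctan_nonneg.2 (inv_nonneg.2 ht.le)) (arctan_lt_pi_div_two t⁻¹)
    rwa [tan_arctan] at h
  rw [setIntegral_compl measurableSet_Icc integrable_inv_one_add_sq, integral_univ_inv_one_add_sq,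
    integral_Icc_eq_integral_Ioc, ← intervalIntegral.integral_of_le (by linarith),
    integral_inv_one_add_sq, arctan_neg]
  rw [arctan_inv_of_pos ht] at harctan
  linarith [div_eq_mul_inv 2 t]

end RealIntegrals

lemma two_le_sqrt_two_pi : 2 ≤ √(2 * π) :=
  Real.le_sqrt_of_sq_le (by linarith [Real.pi_gt_three])

lemma sqrt_two_pi_le_three : √(2 * π) ≤ 3 :=
  Real.sqrt_le_iff.2 ⟨by norm_num, by linarith [Real.pi_lt_four]⟩

section Gaussian

lemma phi_pos (x : ℝ) : 0 < phi x := by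
  unfold phi
  positivity

lemma continuous_phi : Continuous phi := by
  unfold phi
  fun_prop

lemma exp_div_three_le_phi (x : ℝ) : rexp (-x ^ 2 / 2) / 3 ≤ phi x := by
  unfold phi
  gcongr
  exact sqrt_two_pi_le_three

lemma phi_le_exp_div_two (x : ℝ) : phi x ≤ rexp (-x ^ 2 / 2) / 2 := by
  unfold phi
  gcongr
  exact two_le_sqrt_two_pi

lemma phi_le_one_div (x : ℝ) : phi x ≤ 1 / (1 + x ^ 2) := by
  refine (phi_le_exp_div_two x).trans ?_
  have hexp := Real.add_one_le_exp (x ^ 2 / 2)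
  rw [neg_div, Real.exp_neg, inv_eq_one_div, div_div]
  gcongr
  linarith

lemma abs_phi_le_one (x : ℝ) : |phi x| ≤ 1 := by
  rw [abs_of_pos (phi_pos x)]
  exact (phi_le_one_div x).trans (div_le_one_of_le₀ (by nlinarith [sq_nonneg x]) (by positivity))

lemma phi_sub (x u : ℝ) : phi (x - u) = phi x * rexp (x * u - u ^ 2 / 2) := by
  unfold phi
  rw [div_mul_eq_mul_div, ← Real.exp_add]
  ring_nf

lemma gaussianPDFReal_zero_one : ProbabilityTheory.gaussianPDFReal 0 1 = phi := by
  ext x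
  simp [ProbabilityTheory.gaussianPDFReal, phi, div_eq_inv_mul]

lemma integral_gaussianReal_zero_one (f : ℝ → ℝ) :
    ∫ x, f x ∂(ProbabilityTheory.gaussianReal 0 1) = ∫ x, phi x * f x := by
  simp [ProbabilityTheory.integral_gaussianReal_eq_integral_smul one_ne_zero,
    gaussianPDFReal_zero_one]

lemma integrable_phi : Integrable phi :=
  gaussianPDFReal_zero_one ▸ ProbabilityTheory.integrable_gaussianPDFReal 0 1

lemma integral_phi : ∫ x, phi x = 1 :=
  gaussianPDFReal_zero_one ▸ ProbabilityTheory.integral_gaussianPDFReal_eq_one 0 one_ne_zero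

lemma integral_sq_mul_phi : ∫ x, x ^ 2 * phi x = 1 := by
  have hvar := ProbabilityTheory.variance_fun_id_gaussianReal (μ := 0) (v := 1)
  rw [ProbabilityTheory.variance_of_integral_eq_zero (by fun_prop) (by simp),
    integral_gaussianReal_zero_one] at hvar
  simpa [mul_comm] using hvar

lemma integrable_sq_mul_phi : Integrable fun x => x ^ 2 * phi x :=
  .of_integral_ne_zero (by simp [integral_sq_mul_phi])

lemma phi_sq_eq (x : ℝ) : phi x ^ 2 = rexp (-1 * x ^ 2) / (2 * π) := by
  rw [phi, div_pow, Real.sq_sqrt (by positivity), ← Real.exp_nat_mul]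
  ring_nf

lemma integral_phi_sq : ∫ x, phi x ^ 2 = √π / (2 * π) := by
  simp_rw [phi_sq_eq, integral_div, integral_gaussian, div_one]

lemma integrable_phi_sq : Integrable fun x => phi x ^ 2 :=
  .of_integral_ne_zero (by rw [integral_phi_sq]; positivity)

lemma integrable_phi_sub_mul {f : ℝ → ℝ} (hf : Integrable f) (x : ℝ) :
    Integrable fun u => phi (x - u) * f u :=
  integrable_sub_mul continuous_phi abs_phi_le_one hf x

-- In `phi (x - u) ≥ phi x * (1 + x * u - u ^ 2 / 2)` the linear term integrates to zero.
lemma phi_mul_le_integral_phi_sub_mul {f : ℝ → ℝ} (hf₀ : ∀ u, 0 ≤ f u) (hf : Integrable f)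
    (hf₂ : Integrable fun u => u ^ 2 * f u) (heven : f.Even) (x : ℝ) :
    phi x * ((∫ u, f u) - (∫ u, u ^ 2 * f u) / 2) ≤ ∫ u, phi (x - u) * f u := by
  have hf₁ := integrable_id_mul_of_sq hf hf₂
  have hodd : ∫ u, u * f u = 0 := integral_eq_zero_of_odd fun u => by rw [heven, neg_mul]
  calc _ = ∫ u, phi x * (f u + x * (u * f u) - u ^ 2 * f u / 2) := by
        have hlin : Integrable fun u => f u + x * (u * f u) := hf.add (hf₁.const_mul x)
        rw [integral_const_mul, integral_sub hlin (hf₂.div_const 2),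
          integral_add hf (hf₁.const_mul x), integral_const_mul, integral_div, hodd, mul_zero,
          add_zero]
    _ ≤ ∫ u, phi (x - u) * f u := by
        refine integral_mono (((hf.add (hf₁.const_mul x)).sub (hf₂.div_const 2)).const_mul _)
          (integrable_phi_sub_mul hf x) fun u => ?_
        have hexp := mul_le_mul_of_nonneg_left (Real.add_one_le_exp (x * u - u ^ 2 / 2))
          (mul_nonneg (phi_pos x).le (hf₀ u))
        calc phi x * (f u + x * (u * f u) - u ^ 2 * f u / 2)
            = phi x * f u * (x * u - u ^ 2 / 2 + 1) := by ring
          _ ≤ phi x * f u * rexp (x * u - u ^ 2 / 2) := hexp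
          _ = phi (x - u) * f u := by rw [phi_sub, mul_right_comm]

end Gaussian

/-- A spike density `f₀` within a factor two of the standard normal density (from below everywhere,
from above only on `[-R, R]`, as the Laplace tails take over further out) and a slab density `f₁`
with two-sided quadratic decay. These are the only properties of `g₀` and `g₁` that determine the
order of `m̃(α)`. -/
structure GaussianSpikeCauchySlab (f₀ f₁ : ℝ → ℝ) (c C R : ℝ) : Prop where
  integrable_spike : Integrable f₀
  integrable_slab : Integrable f₁
  integral_spike : ∫ x, f₀ x = 1
  integral_slab : ∫ x, f₁ x = 1
  half_phi_le_spike : ∀ x, phi x / 2 ≤ f₀ x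
  spike_le_two_mul_phi : ∀ x, |x| ≤ R → f₀ x ≤ 2 * phi x
  spike_le : ∀ x, f₀ x ≤ C / (1 + x ^ 2)
  lower_pos : 0 < c
  le_slab : ∀ x, c / (1 + x ^ 2) ≤ f₁ x
  slab_le : ∀ x, f₁ x ≤ C / (1 + x ^ 2)

namespace GaussianSpikeCauchySlab

variable {f₀ f₁ : ℝ → ℝ} {c C R α ζ x : ℝ} (h : GaussianSpikeCauchySlab f₀ f₁ c C R)

include h

lemma spike_pos (x : ℝ) : 0 < f₀ x :=
  (half_pos (phi_pos x)).trans_le (h.half_phi_le_spike x)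

lemma slab_pos (x : ℝ) : 0 < f₁ x :=
  (div_pos h.lower_pos (by positivity)).trans_le (h.le_slab x)

lemma slab_le_const (x : ℝ) : f₁ x ≤ C := by
  have hC : 0 ≤ C := by simpa using (h.slab_pos 0).le.trans (h.slab_le 0)
  exact (h.slab_le x).trans (div_le_self hC (by nlinarith [sq_nonneg x]))

lemma lower_le_upper : c ≤ C := by
  simpa using (h.le_slab 0).trans (h.slab_le 0)

lemma upper_pos : 0 < C :=
  h.lower_pos.trans_le h.lower_le_upper

lemma one_le_div : 1 ≤ C / c :=
  (one_le_div₀ h.lower_pos).2 h.lower_le_upper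

lemma spike_le_mul_slab (x : ℝ) : f₀ x ≤ C / c * f₁ x := by
  have hc := h.lower_pos
  have hC := h.upper_pos
  calc f₀ x ≤ C / (1 + x ^ 2) := h.spike_le x
    _ = C / c * (c / (1 + x ^ 2)) := by field_simp
    _ ≤ C / c * f₁ x := by
        gcongr
        exact h.le_slab x

lemma integrable_mixtureInfo (hα₀ : 0 < α) (hα₁ : α ≤ 1) : Integrable (mixtureInfo f₀ f₁ α) :=
  _root_.integrable_mixtureInfo h.spike_pos h.slab_pos h.integrable_spike h.integrable_slab hα₀ hα₁
    h.one_le_div h.spike_le_mul_slab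

lemma abs_neg_integral_phi_mul_mixtureScore_sub_le (hα₀ : 0 < α) (hα₁ : α ≤ 1) :
    |(-∫ x, phi x * mixtureScore f₀ f₁ α x) - ∫ x, mixtureInfo f₀ f₁ α x|
      ≤ C / c / α * ∫ x, |f₀ x - phi x| :=
  abs_neg_integral_mul_mixtureScore_sub_le h.spike_pos h.slab_pos h.integrable_spike
    h.integrable_slab hα₀ hα₁ h.one_le_div h.spike_le_mul_slab
    (h.integral_spike.trans h.integral_slab.symm) integrable_phi

lemma mul_exp_le_ratio (hx : |x| ≤ R) : c / 4 * rexp (x ^ 2 / 4) ≤ f₁ x / f₀ x := by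
  have hc := h.lower_pos
  have hspike : f₀ x ≤ rexp (-x ^ 2 / 2) := by
    linarith [h.spike_le_two_mul_phi x hx, phi_le_exp_div_two x]
  have hpoly : 1 + x ^ 2 ≤ 4 * rexp (x ^ 2 / 4) := by
    linarith [Real.add_one_le_exp (x ^ 2 / 4)]
  have hexp : rexp (x ^ 2 / 4) * rexp (-x ^ 2 / 2) * rexp (x ^ 2 / 4) = 1 := by
    rw [← Real.exp_add, ← Real.exp_add, Real.exp_eq_one_iff]
    ring
  rw [le_div_iff₀ (h.spike_pos x)]
  calc c / 4 * rexp (x ^ 2 / 4) * f₀ x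
      ≤ c / 4 * rexp (x ^ 2 / 4) * rexp (-x ^ 2 / 2) := by gcongr
    _ = c / (4 * rexp (x ^ 2 / 4)) := by
        rw [eq_div_iff (by positivity)]
        linear_combination c * hexp
    _ ≤ c / (1 + x ^ 2) := by gcongr
    _ ≤ f₁ x := h.le_slab x

lemma ratio_le_mul_exp (x : ℝ) : f₁ x / f₀ x ≤ 6 * C * rexp (x ^ 2 / 2) := by
  have hC := h.upper_pos
  have hspike : rexp (-x ^ 2 / 2) / 6 ≤ f₀ x := by
    linarith [h.half_phi_le_spike x, exp_div_three_le_phi x]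
  calc f₁ x / f₀ x ≤ C / (rexp (-x ^ 2 / 2) / 6) := by
        gcongr
        exact h.slab_le_const x
    _ = 6 * C * rexp (x ^ 2 / 2) := by
        rw [neg_div, Real.exp_neg]
        field_simp

lemma ratio_le_ratio (hζ : 1 ≤ ζ) (hx : (2 + 24 * C / c) * ζ ≤ x) (hxR : x ≤ R) :
    f₁ ζ / f₀ ζ ≤ f₁ x / f₀ x := by
  have hc := h.lower_pos
  have hC := h.upper_pos
  set k := 24 * C / c with hk
  have hk₀ : 0 < k := by positivity
  have hx₀ : 0 ≤ (2 + k) * ζ := by positivity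
  have hexponent : k + ζ ^ 2 / 2 ≤ x ^ 2 / 4 := by
    have hsq := pow_le_pow_left₀ hx₀ hx 2
    have hζsq : 1 ≤ ζ ^ 2 := one_le_pow₀ hζ
    nlinarith [mul_nonneg hk₀.le (sub_nonneg.2 hζsq), mul_nonneg (sq_nonneg k) (sq_nonneg ζ)]
  calc f₁ ζ / f₀ ζ ≤ 6 * C * rexp (ζ ^ 2 / 2) := h.ratio_le_mul_exp ζ
    _ = c / 4 * (k * rexp (ζ ^ 2 / 2)) := by
        rw [hk]
        field_simp
        ring
    _ ≤ c / 4 * (rexp k * rexp (ζ ^ 2 / 2)) := by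
        gcongr
        linarith [Real.add_one_le_exp k]
    _ ≤ c / 4 * rexp (x ^ 2 / 4) := by
        rw [← Real.exp_add]
        gcongr
    _ ≤ f₁ x / f₀ x := h.mul_exp_le_ratio (abs_le.2 ⟨by linarith, hxR⟩)

lemma weight_mul_exp_le (hζ : 0 < ζ) (hζR : ζ ≤ R) (hα₀ : 0 < α) (hα₁ : α ≤ 1)
    (hζα : f₁ ζ / f₀ ζ - 1 = 1 / α) : α * rexp (ζ ^ 2 / 8) ≤ 64 / (c * ζ ^ 2) := by
  have hc := h.lower_pos
  have hgrowth := h.mul_exp_le_ratio (abs_le.2 ⟨by linarith, hζR⟩)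
  have hratio : f₁ ζ / f₀ ζ ≤ 2 / α := by
    have hone : 1 ≤ 1 / α := one_le_one_div hα₀ hα₁
    linarith [show 2 / α = 2 * (1 / α) by ring]
  have hsplit : rexp (ζ ^ 2 / 4) = rexp (ζ ^ 2 / 8) * rexp (ζ ^ 2 / 8) := by
    rw [← Real.exp_add]
    ring_nf
  have hweight : c * (α * rexp (ζ ^ 2 / 8)) * rexp (ζ ^ 2 / 8) ≤ 8 := by
    have hle := (le_div_iff₀ hα₀).1 (hgrowth.trans hratio)
    rw [hsplit] at hle
    linarith
  have hquad : ζ ^ 2 / 8 ≤ rexp (ζ ^ 2 / 8) := by linarith [Real.add_one_le_exp (ζ ^ 2 / 8)]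
  rw [le_div_iff₀ (by positivity)]
  nlinarith [mul_le_mul_of_nonneg_left hquad
    (mul_pos hc (mul_pos hα₀ (Real.exp_pos (ζ ^ 2 / 8)))).le]

lemma setIntegral_compl_slab_le {t : ℝ} (ht : 0 < t) :
    ∫ x in (Icc (-t) t)ᶜ, f₁ x ≤ 2 * C / t := by
  have hC := h.upper_pos
  calc ∫ x in (Icc (-t) t)ᶜ, f₁ x ≤ ∫ x in (Icc (-t) t)ᶜ, C * (1 + x ^ 2)⁻¹ :=
        integral_mono h.integrable_slab.integrableOn
          (integrable_inv_one_add_sq.const_mul C).integrableOn fun x => h.slab_le x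
    _ ≤ C * (2 / t) := by
        rw [integral_const_mul]
        gcongr
        exact setIntegral_compl_Icc_inv_one_add_sq_le ht
    _ = 2 * C / t := by ring

lemma slab_sq_div_spike_le {t : ℝ} (hx : |x| ≤ t) :
    f₁ x ^ 2 / f₀ x ≤ 6 * C ^ 2 * rexp (t ^ 2 / 2) := by
  have hC := h.upper_pos
  have hsq : x ^ 2 ≤ t ^ 2 := sq_le_sq' (abs_le.1 hx).1 (abs_le.1 hx).2
  calc f₁ x ^ 2 / f₀ x = f₁ x * (f₁ x / f₀ x) := by ring
    _ ≤ C * (6 * C * rexp (x ^ 2 / 2)) :=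
        mul_le_mul (h.slab_le_const x) (h.ratio_le_mul_exp x)
          (div_nonneg (h.slab_pos x).le (h.spike_pos x).le) hC.le
    _ = 6 * C ^ 2 * rexp (x ^ 2 / 2) := by ring
    _ ≤ 6 * C ^ 2 * rexp (t ^ 2 / 2) := by gcongr

lemma setIntegral_compl_mixtureInfo_le {t : ℝ} (ht : 0 < t) (hα₀ : 0 < α) (hα₁ : α ≤ 1) :
    ∫ x in (Icc (-t) t)ᶜ, mixtureInfo f₀ f₁ α x
      ≤ 2 * C / t + ∫ x in (Icc (-t) t)ᶜ, α * (C / c) * f₀ x := by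
  have hspike := h.integrable_spike.const_mul (α * (C / c))
  calc _ ≤ ∫ x in (Icc (-t) t)ᶜ, (f₁ x + α * (C / c) * f₀ x) :=
        integral_mono (h.integrable_mixtureInfo hα₀ hα₁).integrableOn
          (h.integrable_slab.add hspike).integrableOn fun x =>
            mixtureInfo_le_slab_add (h.spike_pos x) (h.slab_pos x) hα₀ hα₁ h.one_le_div
              (h.spike_le_mul_slab x)
    _ ≤ _ := by
        rw [integral_add h.integrable_slab.integrableOn hspike.integrableOn]
        gcongr
        exact h.setIntegral_compl_slab_le ht

lemma setIntegral_mixtureInfo_le {t : ℝ} (ht : 0 < t) (hα₀ : 0 < α) (hα₁ : α ≤ 1) :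
    ∫ x in Icc (-t) t, mixtureInfo f₀ f₁ α x
      ≤ 12 * C ^ 2 * t * (α * rexp (t ^ 2 / 2)) + ∫ x in Icc (-t) t, α * (C / c) * f₀ x := by
  have hspike := h.integrable_spike.const_mul (α * (C / c))
  have hconst : IntegrableOn (fun _ => α * (6 * C ^ 2 * rexp (t ^ 2 / 2))) (Icc (-t) t) :=
    integrableOn_const (by simp)
  calc _ ≤ ∫ x in Icc (-t) t, (α * (6 * C ^ 2 * rexp (t ^ 2 / 2)) + α * (C / c) * f₀ x) := by
        refine setIntegral_mono_on (h.integrable_mixtureInfo hα₀ hα₁).integrableOn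
          (hconst.add hspike.integrableOn) measurableSet_Icc fun x hx => ?_
        refine (mixtureInfo_le_sq_div_add (h.spike_pos x) (h.slab_pos x) hα₀ hα₁ h.one_le_div
          (h.spike_le_mul_slab x)).trans ?_
        gcongr
        exact h.slab_sq_div_spike_le (abs_le.2 hx)
    _ = _ := by
        rw [integral_add hconst hspike.integrableOn, setIntegral_const]
        rw [Real.volume_real_Icc_of_le (by linarith), smul_eq_mul]
        ring

lemma integral_mixtureInfo_le {t : ℝ} (ht : 0 < t) (hα₀ : 0 < α) (hα₁ : α ≤ 1) :
    ∫ x, mixtureInfo f₀ f₁ α x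
      ≤ 2 * C / t + 12 * C ^ 2 * t * (α * rexp (t ^ 2 / 2)) + α * (C / c) := by
  have hmass : (∫ x in Icc (-t) t, α * (C / c) * f₀ x) +
      ∫ x in (Icc (-t) t)ᶜ, α * (C / c) * f₀ x = α * (C / c) := by
    rw [integral_add_compl measurableSet_Icc (h.integrable_spike.const_mul _), integral_const_mul,
      h.integral_spike, mul_one]
  rw [← integral_add_compl measurableSet_Icc (h.integrable_mixtureInfo hα₀ hα₁), ← hmass]
  calc _ ≤ _ := add_le_add (h.setIntegral_mixtureInfo_le ht hα₀ hα₁)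
        (h.setIntegral_compl_mixtureInfo_le ht hα₀ hα₁)
    _ = _ := by ring

lemma integral_mixtureInfo_le_div (hζ : 1 ≤ ζ) (hζR : ζ ≤ R) (hα₀ : 0 < α) (hα₁ : α ≤ 1)
    (hζα : f₁ ζ / f₀ ζ - 1 = 1 / α) :
    ∫ x, mixtureInfo f₀ f₁ α x ≤ (4 * C + 384 * C ^ 2 / c + 64 * C / c ^ 2) / ζ := by
  have hc := h.lower_pos
  have hC := h.upper_pos
  have hζ₀ : 0 < ζ := by linarith
  have hweight := h.weight_mul_exp_le hζ₀ hζR hα₀ hα₁ hζα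
  have hα : α ≤ 64 / (c * ζ) := by
    calc α ≤ α * rexp (ζ ^ 2 / 8) := le_mul_of_one_le_right hα₀.le (Real.one_le_exp (by positivity))
      _ ≤ 64 / (c * ζ ^ 2) := hweight
      _ ≤ 64 / (c * ζ) := by
          gcongr
          exact le_self_pow₀ hζ two_ne_zero
  calc ∫ x, mixtureInfo f₀ f₁ α x
      ≤ 2 * C / (ζ / 2) + 12 * C ^ 2 * (ζ / 2) * (α * rexp ((ζ / 2) ^ 2 / 2)) + α * (C / c) :=
        h.integral_mixtureInfo_le (half_pos hζ₀) hα₀ hα₁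
    _ = 4 * C / ζ + 6 * C ^ 2 * ζ * (α * rexp (ζ ^ 2 / 8)) + α * (C / c) := by ring_nf
    _ ≤ 4 * C / ζ + 6 * C ^ 2 * ζ * (64 / (c * ζ ^ 2)) + 64 / (c * ζ) * (C / c) := by gcongr
    _ = (4 * C + 384 * C ^ 2 / c + 64 * C / c ^ 2) / ζ := by
        field_simp
        ring

lemma div_le_integral_mixtureInfo_of_forall {a : ℝ} (ha : 1 ≤ a) (hα₀ : 0 < α) (hα₁ : α ≤ 1)
    (hβ : ∀ x ∈ Icc a (2 * a), 1 / α ≤ f₁ x / f₀ x - 1) :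
    c / (20 * a) ≤ ∫ x, mixtureInfo f₀ f₁ α x := by
  have hc := h.lower_pos
  have hinfo := h.integrable_mixtureInfo hα₀ hα₁
  have hbound : ∀ x ∈ Icc a (2 * a), c / (20 * a ^ 2) ≤ mixtureInfo f₀ f₁ α x := by
    intro x hx
    have hpoly : 1 + x ^ 2 ≤ 5 * a ^ 2 := by nlinarith [hx.1, hx.2]
    calc c / (20 * a ^ 2) = c / (5 * a ^ 2) / 4 := by ring
      _ ≤ c / (1 + x ^ 2) / 4 := by gcongr
      _ ≤ f₁ x / 4 := by
          gcongr
          exact h.le_slab x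
      _ ≤ mixtureInfo f₀ f₁ α x := slab_div_four_le_mixtureInfo (h.spike_pos x) hα₀ hα₁ (hβ x hx)
  calc c / (20 * a) = ∫ _ in Icc a (2 * a), c / (20 * a ^ 2) := by
        have hlength : volume.real (Icc a (2 * a)) = a := by
          rw [Real.volume_real_Icc_of_le (by linarith)]
          ring
        rw [setIntegral_const, hlength, smul_eq_mul]
        field_simp
    _ ≤ ∫ x in Icc a (2 * a), mixtureInfo f₀ f₁ α x :=
        setIntegral_mono_on (integrableOn_const (by simp)) hinfo.integrableOn measurableSet_Icc
          hbound
    _ ≤ ∫ x, mixtureInfo f₀ f₁ α x :=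
        setIntegral_le_integral hinfo (.of_forall fun x =>
          mixtureInfo_nonneg (h.spike_pos x) (h.slab_pos x) hα₀ hα₁)

lemma div_le_integral_mixtureInfo (hζ : 1 ≤ ζ) (hζR : 2 * ((2 + 24 * C / c) * ζ) ≤ R)
    (hα₀ : 0 < α) (hα₁ : α ≤ 1) (hζα : f₁ ζ / f₀ ζ - 1 = 1 / α) :
    c / (20 * (2 + 24 * C / c)) / ζ ≤ ∫ x, mixtureInfo f₀ f₁ α x := by
  have hc := h.lower_pos
  have hC := h.upper_pos
  have hfactor : 1 ≤ 2 + 24 * C / c := le_add_of_le_of_nonneg one_le_two (by positivity)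
  rw [div_div, mul_assoc]
  refine h.div_le_integral_mixtureInfo_of_forall (one_le_mul_of_one_le_of_one_le hfactor hζ)
    hα₀ hα₁ fun x hx => ?_
  rw [← hζα]
  exact sub_le_sub_right (h.ratio_le_ratio hζ hx.1 (hx.2.trans hζR)) 1

lemma mul_slab_le_div (hζ : 0 < ζ) : ζ * f₁ ζ ≤ C / ζ := by
  have hC := h.upper_pos
  calc ζ * f₁ ζ ≤ ζ * (C / ζ ^ 2) := by
        gcongr
        exact (h.slab_le ζ).trans (by gcongr; linarith)
    _ = C / ζ := by field_simp

lemma div_le_mul_slab (hζ : 1 ≤ ζ) : c / 2 / ζ ≤ ζ * f₁ ζ := by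
  have hc := h.lower_pos
  calc c / 2 / ζ = ζ * (c / (2 * ζ ^ 2)) := by field_simp
    _ ≤ ζ * f₁ ζ := by
        gcongr
        refine le_trans ?_ (h.le_slab ζ)
        gcongr
        nlinarith

lemma neg_integral_phi_mul_mixtureScore_le (hα₀ : 0 < α) (hα₁ : α ≤ 1) :
    -∫ x, phi x * mixtureScore f₀ f₁ α x ≤ C / c / α := by
  have hscore : Integrable fun x => phi x * mixtureScore f₀ f₁ α x :=
    integrable_mul_mixtureScore h.spike_pos h.slab_pos h.integrable_spike h.integrable_slab hα₀ hα₁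
      h.one_le_div h.spike_le_mul_slab integrable_phi
  calc -∫ x, phi x * mixtureScore f₀ f₁ α x = ∫ x, -(phi x * mixtureScore f₀ f₁ α x) :=
        (integral_neg _).symm
    _ ≤ ∫ x, phi x * (C / c / α) := by
        refine integral_mono hscore.neg (integrable_phi.mul_const _) fun x => ?_
        rw [← mul_neg]
        exact mul_le_mul_of_nonneg_left ((neg_le_abs _).trans <| abs_mixtureScore_le (h.spike_pos x)
          (h.slab_pos x) hα₀ hα₁ h.one_le_div (h.spike_le_mul_slab x)) (phi_pos x).le
    _ = C / c / α := by rw [integral_mul_const, integral_phi, one_mul]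

lemma sub_div_le_neg_integral_phi_mul_mixtureScore_one {B : ℝ} (hB : ∀ x, f₁ x ≤ B) :
    √π / (4 * π * B) - 1 ≤ -∫ x, phi x * mixtureScore f₀ f₁ 1 x := by
  have hscore : Integrable fun x => phi x * mixtureScore f₀ f₁ 1 x :=
    integrable_mul_mixtureScore h.spike_pos h.slab_pos h.integrable_spike h.integrable_slab
      one_pos le_rfl h.one_le_div h.spike_le_mul_slab integrable_phi
  calc √π / (4 * π * B) - 1 = ∫ x, (phi x ^ 2 / (2 * B) - phi x) := by
        rw [integral_sub (integrable_phi_sq.div_const _) integrable_phi, integral_div,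
          integral_phi_sq, integral_phi]
        ring
    _ ≤ ∫ x, -(phi x * mixtureScore f₀ f₁ 1 x) := by
        refine integral_mono ((integrable_phi_sq.div_const _).sub integrable_phi) hscore.neg
          fun x => ?_
        have hslab := h.slab_pos x
        have hphi := phi_pos x
        have hscore_one : mixtureScore f₀ f₁ 1 x = 1 - f₀ x / f₁ x := by
          simp [mixtureScore, sub_div, hslab.ne']
        calc phi x ^ 2 / (2 * B) - phi x = phi x * (phi x / 2 / B) - phi x := by ring
          _ ≤ phi x * (f₀ x / f₁ x) - phi x := by
              gcongr
              · exact (h.spike_pos x).le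
              · exact h.half_phi_le_spike x
              · exact hB x
          _ = -(phi x * mixtureScore f₀ f₁ 1 x) := by
              rw [hscore_one]
              ring
    _ = -∫ x, phi x * mixtureScore f₀ f₁ 1 x := integral_neg _

end GaussianSpikeCauchySlab

lemma exists_neg_integral_phi_mul_mixtureScore_bounds {c C : ℝ} (hc : 0 < c) (hC : 0 < C) :
    ∃ M > 0, ∃ ε > 0, ∃ D₁ > 0, ∃ D₂ > 0, ∀ ⦃f₀ f₁ : ℝ → ℝ⦄ ⦃R α ζ : ℝ⦄,
      GaussianSpikeCauchySlab f₀ f₁ c C R → 0 < α → α ≤ 1 → 1 ≤ ζ → M * ζ ≤ R →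
      f₁ ζ / f₀ ζ - 1 = 1 / α → ∫ x, |f₀ x - phi x| ≤ ε * (α / ζ) →
      D₁ * (ζ * f₁ ζ) ≤ -∫ x, phi x * mixtureScore f₀ f₁ α x ∧
        -∫ x, phi x * mixtureScore f₀ f₁ α x ≤ D₂ * (ζ * f₁ ζ) := by
  set d := c / (20 * (2 + 24 * C / c))
  set D := 4 * C + 384 * C ^ 2 / c + 64 * C / c ^ 2
  have hd₀ : 0 < d := by positivity
  refine ⟨2 * (2 + 24 * C / c), by positivity, c * d / (2 * C), by positivity, d / (2 * C),
    by positivity, 2 * (D + d) / c, by positivity, ?_⟩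
  intro f₀ f₁ R α ζ h hα₀ hα₁ hζ hζR hζα hdist
  have hζ₀ : 0 < ζ := by linarith
  rw [mul_assoc] at hζR
  have hζR' : ζ ≤ R := by
    have : 0 ≤ 24 * C / c * ζ := by positivity
    linarith
  have hlower := h.div_le_integral_mixtureInfo hζ hζR hα₀ hα₁ hζα
  have hupper := h.integral_mixtureInfo_le_div hζ hζR' hα₀ hα₁ hζα
  have herror : C / c / α * ∫ x, |f₀ x - phi x| ≤ d / 2 / ζ := by
    calc C / c / α * ∫ x, |f₀ x - phi x| ≤ C / c / α * (c * d / (2 * C) * (α / ζ)) := by gcongr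
      _ = d / 2 / ζ := by field_simp
  obtain ⟨hge, hle⟩ :=
    abs_le.1 ((h.abs_neg_integral_phi_mul_mixtureScore_sub_le hα₀ hα₁).trans herror)
  constructor
  · calc d / (2 * C) * (ζ * f₁ ζ) ≤ d / (2 * C) * (C / ζ) := by
          gcongr
          exact h.mul_slab_le_div hζ₀
      _ = d / ζ - d / 2 / ζ := by
          field_simp
          norm_num
      _ ≤ _ := by linarith
  · calc _ ≤ D / ζ + d / 2 / ζ := by linarith
      _ ≤ D / ζ + d / ζ := by
          gcongr
          exact half_le_self hd₀.le
      _ = 2 * (D + d) / c * (c / 2 / ζ) := by field_simp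
      _ ≤ 2 * (D + d) / c * (ζ * f₁ ζ) := by
          gcongr
          exact h.div_le_mul_slab hζ

section Spike

variable {n : ℕ}

lemma ten_mul_le_lam0 (n : ℕ) : 10 * (n : ℝ) ≤ lam0 n := by
  have hle := mul_le_mul_of_nonneg_right two_le_sqrt_two_pi n.cast_nonneg (α := ℝ)
  unfold lam0
  linarith

lemma ten_le_lam0 (hn : 1 ≤ n) : 10 ≤ lam0 n := by
  have hn' : (1 : ℝ) ≤ n := Nat.one_le_cast.2 hn
  linarith [ten_mul_le_lam0 n]

lemma lam0_pos (hn : 1 ≤ n) : 0 < lam0 n := by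
  linarith [ten_le_lam0 hn]

lemma lam0_nonneg (n : ℕ) : 0 ≤ lam0 n := by
  unfold lam0
  positivity

lemma gamma0_nonneg (n : ℕ) (u : ℝ) : 0 ≤ gamma0 n u :=
  mul_nonneg (div_nonneg (lam0_nonneg n) zero_le_two) (Real.exp_pos _).le

lemma gamma0_even (n : ℕ) : (gamma0 n).Even := fun u => by
  rw [gamma0, gamma0, abs_neg]

lemma integral_gamma0 (hn : 1 ≤ n) : ∫ u, gamma0 n u = 1 := by
  have hpos := lam0_pos hn
  unfold gamma0
  rw [integral_const_mul, integral_exp_neg_mul_abs hpos]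
  field_simp

lemma integrable_gamma0 (hn : 1 ≤ n) : Integrable (gamma0 n) :=
  .of_integral_ne_zero (by simp [integral_gamma0 hn])

lemma integral_sq_mul_gamma0 (hn : 1 ≤ n) : ∫ u, u ^ 2 * gamma0 n u = 2 / lam0 n ^ 2 := by
  have hpos := lam0_pos hn
  simp_rw [gamma0, mul_left_comm (_ ^ 2) (lam0 n / 2)]
  rw [integral_const_mul, integral_sq_mul_exp_neg_mul_abs hpos]
  field_simp
  norm_num

lemma integrable_sq_mul_gamma0 (hn : 1 ≤ n) : Integrable fun u => u ^ 2 * gamma0 n u :=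
  .of_integral_ne_zero (by simp [integral_sq_mul_gamma0 hn, (lam0_pos hn).ne'])

lemma continuous_g0 (hn : 1 ≤ n) : Continuous (g0 n) :=
  continuous_integral_sub_mul continuous_phi abs_phi_le_one (integrable_gamma0 hn)

lemma integrable_g0 (hn : 1 ≤ n) : Integrable (g0 n) :=
  integrable_integral_sub_mul integrable_phi (integrable_gamma0 hn)

lemma integral_g0 (hn : 1 ≤ n) : ∫ x, g0 n x = 1 :=
  (integral_integral_sub_mul integrable_phi (integrable_gamma0 hn)).trans
    (by rw [integral_gamma0 hn, integral_phi, mul_one])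

lemma one_sub_mul_phi_le_g0 (hn : 1 ≤ n) (x : ℝ) : (1 - 1 / lam0 n ^ 2) * phi x ≤ g0 n x := by
  have hle := phi_mul_le_integral_phi_sub_mul (gamma0_nonneg n) (integrable_gamma0 hn)
    (integrable_sq_mul_gamma0 hn) (gamma0_even n) x
  rw [integral_gamma0 hn, integral_sq_mul_gamma0 hn] at hle
  calc _ = phi x * (1 - 2 / lam0 n ^ 2 / 2) := by ring
    _ ≤ g0 n x := hle

lemma half_phi_le_g0 (hn : 1 ≤ n) (x : ℝ) : phi x / 2 ≤ g0 n x := by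
  have hrate : 1 / lam0 n ^ 2 ≤ 1 / 2 :=
    one_div_le_one_div_of_le two_pos (by nlinarith [ten_le_lam0 hn])
  calc phi x / 2 = 1 / 2 * phi x := by ring
    _ ≤ (1 - 1 / lam0 n ^ 2) * phi x :=
        mul_le_mul_of_nonneg_right (by linarith) (phi_pos x).le
    _ ≤ g0 n x := one_sub_mul_phi_le_g0 hn x

lemma integral_abs_g0_sub_phi_le (hn : 1 ≤ n) : ∫ x, |g0 n x - phi x| ≤ 2 / lam0 n ^ 2 := by
  have hle := integral_abs_sub_le_of_mul_le (fun x => (phi_pos x).le)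
    (one_div_nonneg.2 (sq_nonneg (lam0 n))) integrable_phi (integrable_g0 hn)
    (integral_phi.trans (integral_g0 hn).symm) (one_sub_mul_phi_le_g0 hn)
  rwa [integral_phi, mul_one, mul_one_div] at hle

-- For `|x| ≤ λ₀ / 2`, tilting the Laplace density by `exp (x * u)` at most halves its rate.
lemma g0_le_two_mul_phi (hn : 1 ≤ n) {x : ℝ} (hx : |x| ≤ lam0 n / 2) : g0 n x ≤ 2 * phi x := by
  have hrate := (lam0_pos hn).ne'
  have hpos := half_pos (lam0_pos hn)
  have hlaplace := integral_exp_neg_mul_abs hpos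
  calc g0 n x ≤ ∫ u, phi x * (lam0 n / 2) * rexp (-(lam0 n / 2) * |u|) := by
        refine integral_mono (integrable_phi_sub_mul (integrable_gamma0 hn) x)
          (Integrable.const_mul (.of_integral_ne_zero ?_) _) fun u => ?_
        · rw [hlaplace]
          positivity
        · have hxu : x * u ≤ lam0 n / 2 * |u| :=
            (le_abs_self _).trans (abs_mul x u ▸ mul_le_mul_of_nonneg_right hx (abs_nonneg u))
          calc phi (x - u) * gamma0 n u
              = phi x * (lam0 n / 2) * rexp (x * u - u ^ 2 / 2 - lam0 n * |u|) := by
                rw [phi_sub, gamma0, sub_eq_add_neg _ (lam0 n * |u|), Real.exp_add, neg_mul]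
                ring
            _ ≤ phi x * (lam0 n / 2) * rexp (-(lam0 n / 2) * |u|) := by
                have := phi_pos x
                gcongr
                linarith [sq_nonneg u]
    _ = 2 * phi x := by
        rw [integral_const_mul, hlaplace]
        field_simp

lemma g0_le_four_div (hn : 1 ≤ n) (x : ℝ) : g0 n x ≤ 4 / (1 + x ^ 2) := by
  refine (integral_sub_mul_le (fun y => (phi_pos y).le) phi_le_one_div (gamma0_nonneg n)
    (integrable_gamma0 hn) (integrable_sq_mul_gamma0 hn) x).trans ?_
  rw [integral_gamma0 hn, integral_sq_mul_gamma0 hn]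
  have hrate : 2 / lam0 n ^ 2 ≤ 1 :=
    div_le_one_of_le₀ (by nlinarith [ten_le_lam0 hn]) (sq_nonneg _)
  gcongr
  linarith

end Spike

section Slab

lemma lam1_pos : 0 < lam1 := by
  norm_num [lam1]

lemma lam1_sq_le_one : lam1 ^ 2 ≤ 1 := by
  norm_num [lam1]

lemma cauchyPDFReal_zero_twenty : ProbabilityTheory.cauchyPDFReal 0 20 = gamma1 := by
  ext x
  rw [ProbabilityTheory.cauchyPDFReal_def', gamma1, lam1]
  norm_num
  ring_nf

lemma integrable_gamma1 : Integrable gamma1 :=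
  cauchyPDFReal_zero_twenty ▸ ProbabilityTheory.integrable_cauchyPDFReal 0

lemma integral_gamma1 : ∫ u, gamma1 u = 1 :=
  cauchyPDFReal_zero_twenty ▸ ProbabilityTheory.integral_cauchyPDFReal_eq_one 0 (by norm_num)

lemma gamma1_nonneg (u : ℝ) : 0 ≤ gamma1 u := by
  have := lam1_pos
  unfold gamma1
  positivity

lemma gamma1_le (u : ℝ) : gamma1 u ≤ lam1 / π :=
  mul_le_of_le_one_right (div_pos lam1_pos Real.pi_pos).le
    (inv_le_one_of_one_le₀ (le_add_of_nonneg_right (by positivity)))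

lemma gamma1_le_div (u : ℝ) : gamma1 u ≤ 1 / (lam1 * π) / (1 + u ^ 2) := by
  have hpos := lam1_pos
  calc gamma1 u = 1 / (lam1 * π) / ((1 + lam1 ^ 2 * u ^ 2) / lam1 ^ 2) := by
        unfold gamma1
        field_simp
    _ ≤ 1 / (lam1 * π) / (1 + u ^ 2) := by
        gcongr
        rw [le_div_iff₀ (by positivity)]
        linarith [lam1_sq_le_one]

lemma div_le_gamma1 (u : ℝ) : lam1 / π / (1 + u ^ 2) ≤ gamma1 u := by
  have hpos := lam1_pos
  rw [gamma1, ← div_eq_mul_inv]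
  gcongr
  exact mul_le_of_le_one_left (sq_nonneg u) lam1_sq_le_one

lemma g1_eq_integral_gamma1_sub_mul (x : ℝ) : g1 x = ∫ u, gamma1 (x - u) * phi u := by
  rw [g1, ← integral_sub_left_eq_self _ volume x]
  simp_rw [sub_sub_cancel, mul_comm (phi _)]

lemma continuous_g1 : Continuous g1 :=
  continuous_integral_sub_mul continuous_phi abs_phi_le_one integrable_gamma1

lemma integrable_g1 : Integrable g1 :=
  integrable_integral_sub_mul integrable_phi integrable_gamma1

lemma integral_g1 : ∫ x, g1 x = 1 :=
  (integral_integral_sub_mul integrable_phi integrable_gamma1).trans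
    (by rw [integral_gamma1, integral_phi, mul_one])

lemma g1_le (x : ℝ) : g1 x ≤ lam1 / π := by
  calc g1 x = ∫ u, gamma1 (x - u) * phi u := g1_eq_integral_gamma1_sub_mul x
    _ ≤ ∫ u, lam1 / π * phi u :=
        integral_mono_of_nonneg
          (.of_forall fun u => mul_nonneg (gamma1_nonneg _) (phi_pos u).le)
          (integrable_phi.const_mul _)
          (.of_forall fun u => mul_le_mul_of_nonneg_right (gamma1_le _) (phi_pos u).le)
    _ = lam1 / π := by rw [integral_const_mul, integral_phi, mul_one]

lemma g1_le_div (x : ℝ) : g1 x ≤ 4 / (lam1 * π) / (1 + x ^ 2) := by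
  rw [g1_eq_integral_gamma1_sub_mul]
  refine (integral_sub_mul_le gamma1_nonneg gamma1_le_div (fun u => (phi_pos u).le) integrable_phi
    integrable_sq_mul_phi x).trans_eq ?_
  rw [integral_phi, integral_sq_mul_phi]
  ring

lemma div_le_g1 (x : ℝ) : lam1 / (4 * π) / (1 + x ^ 2) ≤ g1 x := by
  have hint : Integrable fun u => gamma1 (x - u) * phi u := by
    simpa [mul_comm] using (integrable_phi_sub_mul integrable_gamma1 x).comp_sub_left x
  rw [g1_eq_integral_gamma1_sub_mul]
  refine le_of_eq_of_le ?_ (le_integral_sub_mul (div_pos lam1_pos Real.pi_pos).le div_le_gamma1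
    (fun u => (phi_pos u).le) integrable_phi integrable_sq_mul_phi hint)
  rw [integral_phi, integral_sq_mul_phi]
  field_simp
  ring

end Slab

lemma gaussianSpikeCauchySlab_g0_g1 {n : ℕ} (hn : 1 ≤ n) :
    GaussianSpikeCauchySlab (g0 n) g1 (lam1 / (4 * π)) (4 / (lam1 * π)) (lam0 n / 2) where
  integrable_spike := integrable_g0 hn
  integrable_slab := integrable_g1
  integral_spike := integral_g0 hn
  integral_slab := integral_g1
  half_phi_le_spike := half_phi_le_g0 hn
  spike_le_two_mul_phi _ := g0_le_two_mul_phi hn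
  spike_le x := (g0_le_four_div hn x).trans <| by
    gcongr
    rw [le_div_iff₀ (mul_pos lam1_pos Real.pi_pos), lam1]
    linarith [Real.pi_lt_four]
  lower_pos := div_pos lam1_pos (by positivity)
  le_slab := div_le_g1
  slab_le := g1_le_div

section Threshold

variable {n : ℕ} {α ζ : ℝ}

lemma mtildeSSL_eq (hn : 1 ≤ n) (α : ℝ) :
    mtildeSSL n α = -∫ x, phi x * mixtureScore (g0 n) g1 α x := by
  simp_rw [mtildeSSL, betaSSL, integral_gaussianReal_zero_one,
    div_one_add_mul_eq_mixtureScore ((gaussianSpikeCauchySlab_g0_g1 hn).spike_pos _).ne']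

lemma continuous_betaSSL (hn : 1 ≤ n) : Continuous (betaSSL n) :=
  (continuous_g1.div (continuous_g0 hn)
    fun x => ((gaussianSpikeCauchySlab_g0_g1 hn).spike_pos x).ne').sub continuous_const

lemma betaSSL_lt_one (hn : 1 ≤ n) {x : ℝ} (hx : |x| ≤ 1) : betaSSL n x < 1 := by
  have hslab : g1 x ≤ 1 / 60 := (g1_le x).trans <| by
    rw [lam1, div_le_iff₀ Real.pi_pos]
    linarith [Real.pi_gt_three]
  have hspike : 1 / 12 ≤ g0 n x := by
    have hsq : x ^ 2 ≤ 1 := (sq_le_one_iff_abs_le_one x).2 hx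
    linarith [half_phi_le_g0 hn x, exp_div_three_le_phi x, Real.add_one_le_exp (-x ^ 2 / 2)]
  rw [betaSSL, sub_lt_iff_lt_add, div_lt_iff₀ (by linarith)]
  linarith

lemma IsZetaSSL.one_le (hζ : IsZetaSSL n α ζ) (hn : 1 ≤ n) (hα₀ : 0 < α) (hα₁ : α ≤ 1) :
    1 ≤ ζ := by
  by_contra! hlt
  have hβ := betaSSL_lt_one hn (abs_le.2 ⟨by linarith [hζ.1], hlt.le⟩)
  rw [hζ.2.1] at hβ
  exact hβ.not_ge (one_le_one_div hα₀ hα₁)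

lemma IsZetaSSL.le_of_le_betaSSL (hζ : IsZetaSSL n α ζ) (hn : 1 ≤ n) (hα₀ : 0 < α) (hα₁ : α ≤ 1)
    {s : ℝ} (hs : 0 ≤ s) (hβ : 1 / α ≤ betaSSL n s) : ζ ≤ s := by
  have hβ₀ : betaSSL n 0 < 1 / α :=
    (betaSSL_lt_one hn (by simp)).trans_le (one_le_one_div hα₀ hα₁)
  obtain ⟨t, ht, hβt⟩ :=
    intermediate_value_Icc hs (continuous_betaSSL hn).continuousOn ⟨hβ₀.le, hβ⟩
  have ht₀ : 0 < t := ht.1.lt_of_ne fun h => hβ₀.ne (h ▸ hβt)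
  exact (hζ.2.2 t ht₀ hβt).trans ht.2

lemma eventually_le_betaSSL_mul {ε : ℝ} (hε₀ : 0 < ε) (hε₁ : ε ≤ 1) :
    ∀ᶠ n : ℕ in Filter.atTop, n ≤ betaSSL n (ε * n) := by
  have hc : 0 < lam1 / (4 * π) := div_pos lam1_pos (by positivity)
  filter_upwards [Filter.eventually_ge_atTop 1,
    tendsto_natCast_atTop_atTop.eventually_ge_atTop (32 / (lam1 / (4 * π) * ε ^ 2))]
    with n hn hlarge
  have hn₁ : (1 : ℝ) ≤ n := Nat.one_le_cast.2 hn
  have hrange : |ε * n| ≤ lam0 n / 2 := by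
    rw [abs_of_nonneg (by positivity)]
    linarith [ten_mul_le_lam0 n, mul_le_mul_of_nonneg_right hε₁ n.cast_nonneg]
  rw [div_le_iff₀ (by positivity)] at hlarge
  rw [betaSSL, le_sub_iff_add_le]
  calc (n : ℝ) + 1 ≤ lam1 / (4 * π) / 4 * ((ε * n) ^ 2 / 4) := by
        linarith [mul_le_mul_of_nonneg_right hlarge n.cast_nonneg]
    _ ≤ lam1 / (4 * π) / 4 * rexp ((ε * n) ^ 2 / 4) := by
        gcongr
        linarith [Real.add_one_le_exp ((ε * n) ^ 2 / 4)]
    _ ≤ g1 (ε * n) / g0 n (ε * n) := (gaussianSpikeCauchySlab_g0_g1 hn).mul_exp_le_ratio hrange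

lemma eventually_isZetaSSL_le_mul {ε : ℝ} (hε : 0 < ε) :
    ∀ᶠ n : ℕ in Filter.atTop, ∀ α ∈ Icc (1 / n : ℝ) 1, ∀ ζ, IsZetaSSL n α ζ → ζ ≤ ε * n := by
  filter_upwards [Filter.eventually_ge_atTop 1,
    eventually_le_betaSSL_mul (lt_min hε one_pos) (min_le_right ε 1)] with n hn hβ α hα ζ hζ
  have hn₀ : (0 : ℝ) < n := Nat.cast_pos.2 hn
  have hα₀ : 0 < α := (one_div_pos.2 hn₀).trans_le hα.1
  calc ζ ≤ min ε 1 * n := hζ.le_of_le_betaSSL hn hα₀ hα.2 (by positivity)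
        (((one_div_le hα₀ hn₀).2 hα.1).trans hβ)
    _ ≤ ε * n := by
        gcongr
        exact min_le_left ε 1

end Threshold

lemma exists_mtildeSSL_bounds :
    ∃ D₁ > (0 : ℝ), ∃ D₂ > (0 : ℝ), ∀ᶠ n : ℕ in Filter.atTop, ∀ α ∈ Icc (1 / n : ℝ) 1,
      ∀ ζ, IsZetaSSL n α ζ →
        D₁ * (ζ * g1 ζ) ≤ mtildeSSL n α ∧ mtildeSSL n α ≤ D₂ * (ζ * g1 ζ) := by
  have hslab := gaussianSpikeCauchySlab_g0_g1 le_rfl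
  obtain ⟨M, hM, ε, hε, D₁, hD₁, D₂, hD₂, hbounds⟩ :=
    exists_neg_integral_phi_mul_mixtureScore_bounds hslab.lower_pos hslab.upper_pos
  refine ⟨D₁, hD₁, D₂, hD₂, ?_⟩
  filter_upwards [Filter.eventually_ge_atTop 1, eventually_isZetaSSL_le_mul (one_div_pos.2 hM),
    eventually_isZetaSSL_le_mul hε] with n hn hζM hζε α hα ζ hζ
  have hn₀ : (0 : ℝ) < n := Nat.cast_pos.2 hn
  have hα₀ : 0 < α := (one_div_pos.2 hn₀).trans_le hα.1
  have hlam0 := ten_mul_le_lam0 n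
  have hrange : M * ζ ≤ lam0 n / 2 := by
    have hle := hζM α hα ζ hζ
    rw [one_div_mul_eq_div, le_div_iff₀' hM] at hle
    linarith
  have hrate : 1 / (50 * n) ≤ ε / ζ := by
    rw [div_le_div_iff₀ (by positivity) hζ.1]
    linarith [hζε α hα ζ hζ, mul_pos hε hn₀]
  have hdist : ∫ x, |g0 n x - phi x| ≤ ε * (α / ζ) := by
    calc ∫ x, |g0 n x - phi x| ≤ 2 / lam0 n ^ 2 := integral_abs_g0_sub_phi_le hn
      _ ≤ 2 / (10 * n) ^ 2 := by gcongr
      _ = 1 / n * (1 / (50 * n)) := by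
          field_simp
          norm_num
      _ ≤ α * (ε / ζ) := mul_le_mul hα.1 hrate (by positivity) hα₀.le
      _ = ε * (α / ζ) := by ring
  rw [mtildeSSL_eq hn]
  exact hbounds (gaussianSpikeCauchySlab_g0_g1 hn) hα₀ hα.2 (hζ.one_le hn hα₀ hα.2) hrange hζ.2.1
    hdist

lemma one_le_mtildeSSL_one {n : ℕ} (hn : 1 ≤ n) : 1 ≤ mtildeSSL n 1 := by
  have hlower :=
    (gaussianSpikeCauchySlab_g0_g1 hn).sub_div_le_neg_integral_phi_mul_mixtureScore_one g1_le
  have hvalue : √π / (4 * π * (lam1 / π)) = 5 * √π := by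
    rw [lam1]
    field_simp
    norm_num
  have hsqrt : 1 ≤ √π := Real.one_le_sqrt.2 (by linarith [Real.pi_gt_three])
  rw [mtildeSSL_eq hn]
  linarith

lemma mtildeSSL_one_le {n : ℕ} (hn : 1 ≤ n) :
    mtildeSSL n 1 ≤ 4 / (lam1 * π) / (lam1 / (4 * π)) := by
  rw [mtildeSSL_eq hn, ← div_one (_ / _)]
  exact (gaussianSpikeCauchySlab_g0_g1 hn).neg_integral_phi_mul_mixtureScore_le one_pos le_rfl

lemma one_le_log_natCast {n : ℕ} (hn : 3 ≤ n) : 1 ≤ Real.log n := by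
  have hn' : (3 : ℝ) ≤ n := Nat.ofNat_le_cast.2 hn
  rw [Real.le_log_iff_exp_le (by linarith)]
  linarith [Real.exp_one_lt_d9]

theorem mtildeSSL_bounds_general :
    (∃ D₁ > (0 : ℝ), ∃ D₂ > (0 : ℝ), ∃ N₀ : ℕ, ∀ n : ℕ, N₀ ≤ n →
      ∀ α ∈ Icc (1 / n : ℝ) 1, ∀ ζ, IsZetaSSL n α ζ →
        D₁ * (ζ * g1 ζ) ≤ mtildeSSL n α ∧ mtildeSSL n α ≤ D₂ * (ζ * g1 ζ)) ∧
    (∃ c > (0 : ℝ), ∃ C > (0 : ℝ), ∀ n : ℕ, 1 ≤ n → c ≤ mtildeSSL n 1 ∧ mtildeSSL n 1 ≤ C) := by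
  have hslab := gaussianSpikeCauchySlab_g0_g1 le_rfl
  refine ⟨?_, 1, one_pos, _, div_pos hslab.upper_pos hslab.lower_pos, fun n hn =>
    ⟨one_le_mtildeSSL_one hn, mtildeSSL_one_le hn⟩⟩
  simpa only [Filter.eventually_atTop] using exists_mtildeSSL_bounds

/-- Proposition: the first moment of the SSL score.
With `κ = 2`, for any constant `𝒞 > 1` with `β(√(2 log n)) ≥ n/(𝒞 log n)`,
there are `D₁, D₂ > 0` such that for all `α ∈ (𝒞 log n/n, 1]`,
`D₁ ζ^{κ-1} g₁(ζ) ≤ m̃(α) ≤ D₂ ζ^{κ-1} g₁(ζ)` where `ζ = ζ(α)` is the least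
positive solution of `β = 1/α`.  Moreover `c ≤ m̃(1) ≤ C` for constants
`c, C > 0` independent of `n`. -/
theorem mtildeSSL_bounds :
    (∀ Ccal : ℝ, 1 < Ccal →
      ∃ D1 > (0 : ℝ), ∃ D2 > (0 : ℝ), ∃ N0 : ℕ, ∀ n : ℕ, N0 ≤ n →
        (n : ℝ) / (Ccal * Real.log n) ≤ betaSSL n (Real.sqrt (2 * Real.log n)) →
        ∀ α ∈ Set.Ioc (Ccal * Real.log n / n) 1, ∀ ζα : ℝ, IsZetaSSL n α ζα →
          D1 * (ζα ^ (2 - 1 : ℕ) * g1 ζα) ≤ mtildeSSL n α ∧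
          mtildeSSL n α ≤ D2 * (ζα ^ (2 - 1 : ℕ) * g1 ζα)) ∧
    (∃ c > (0 : ℝ), ∃ C > (0 : ℝ), ∃ N1 : ℕ, ∀ n : ℕ, N1 ≤ n →
      c ≤ mtildeSSL n 1 ∧ mtildeSSL n 1 ≤ C) := by
  obtain ⟨⟨D₁, hD₁, D₂, hD₂, N, hbounds⟩, c, hc, C, hC, hone⟩ := mtildeSSL_bounds_general
  refine ⟨fun Ccal hCcal => ⟨D₁, hD₁, D₂, hD₂, max N 3, fun n hn _ α hα ζα hζ => ?_⟩,
    c, hc, C, hC, 1, hone⟩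
  have hlog : 1 ≤ Ccal * Real.log n :=
    one_le_mul_of_one_le_of_one_le hCcal.le (one_le_log_natCast (le_of_max_le_right hn))
  have hα' : α ∈ Icc (1 / n : ℝ) 1 := ⟨(div_le_div_of_nonneg_right hlog n.cast_nonneg).trans
    hα.1.le, hα.2⟩
  simpa using hbounds n (le_of_max_le_left hn) α hα' ζα hζ

end
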